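/- Let φ : ℝ/ℤ → ℝ be a continuous function that is constant on a nondegenerate arc, i.e. there exist real numbers a < b with b − a < 1 and a constant c such that φ(π(t)) = c for all t ∈ [a, b]. Let ψ : ℝ/ℤ → ℝ be a Morse measuring function. Then there is no homeomorphism f : ℝ/ℤ → ℝ/ℤ with ψ(f(x)) = φ(x) for all x ∈ ℝ/ℤ; in particular no optimal homeomorphism between (ℝ/ℤ, φ) and (ℝ/ℤ, ψ) exists when their natural pseudo-distance is 0. -/

import Mathlib

open Set

/-!
If `ψ ∘ f = φ`, then `f` carries the interior of the arc onto a nonempty open set on which `ψ` is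
constant. Near a point of that set the lift of `ψ` has zero first and second derivatives, which the
Morse condition forbids.
-/

open Filter Topology

theorem eventuallyConst_nhds_of_comp_isOpenMap {X Y Z : Type*} [TopologicalSpace X]
    [TopologicalSpace Y] {f : X → Y} {g : Y → Z} {x : X} (hf : IsOpenMap f)
    (h : EventuallyConst (g ∘ f) (𝓝 x)) : EventuallyConst g (𝓝 (f x)) :=
  have h_map : EventuallyConst g (map f (𝓝 x)) := h
  h_map.anti (hf.nhds_le x)

section Deriv

variable {𝕜 E : Type*} [NontriviallyNormedField 𝕜] [NormedAddCommGroup E] [NormedSpace 𝕜 E]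
  {g : 𝕜 → E} {t : 𝕜}

theorem deriv_eventuallyEq_zero_of_eventuallyConst (h : EventuallyConst g (𝓝 t)) :
    deriv g =ᶠ[𝓝 t] fun _ => 0 := by
  obtain ⟨c, hc⟩ := h.eventuallyEq_const
  simpa only [deriv_const'] using hc.deriv

theorem not_eventuallyConst_nhds_of_deriv_ne_zero_or_deriv_deriv_ne_zero
    (h : deriv g t ≠ 0 ∨ deriv (deriv g) t ≠ 0) : ¬ EventuallyConst g (𝓝 t) := by
  intro hg
  have hderiv : deriv g =ᶠ[𝓝 t] fun _ => 0 := deriv_eventuallyEq_zero_of_eventuallyConst hg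
  have hderiv₂ : deriv (deriv g) =ᶠ[𝓝 t] fun _ => 0 :=
    deriv_eventuallyEq_zero_of_eventuallyConst ((EventuallyConst.const 0).congr hderiv.symm)
  exact h.elim (· hderiv.eq_of_nhds) (· hderiv₂.eq_of_nhds)

end Deriv

theorem not_eventuallyConst_nhds_addCircle_of_lift {p : ℝ} {Z : Type*} {ψ : AddCircle p → Z}
    (h : ∀ t : ℝ, ¬ EventuallyConst (fun s : ℝ => ψ (s : AddCircle p)) (𝓝 t))
    (x : AddCircle p) : ¬ EventuallyConst ψ (𝓝 x) := by
  obtain ⟨t, rfl⟩ := QuotientAddGroup.mk_surjective x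
  exact fun hψ => h t (hψ.comp_tendsto (AddCircle.continuous_mk' p).continuousAt)

theorem no_optimal_homeomorphism_of_constant_on_arc_general {p : ℝ} {Y Z : Type*}
    [TopologicalSpace Y] {φ : AddCircle p → Z} {ψ : Y → Z} {a b : ℝ} {c : Z} (hab : a < b)
    (hconst : ∀ t ∈ Icc a b, φ (t : AddCircle p) = c)
    (hψ : ∀ y, ¬ EventuallyConst ψ (𝓝 y)) :
    ¬ ∃ f : AddCircle p → Y, IsOpenMap f ∧ ∀ x, ψ (f x) = φ x := by
  rintro ⟨f, hf, hfφ⟩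
  obtain ⟨s, hs⟩ := nonempty_Ioo.mpr hab
  have hlift_open : IsOpenMap fun t : ℝ => f (t : AddCircle p) :=
    hf.comp QuotientAddGroup.isOpenMap_coe
  have hlift_eq : (ψ ∘ fun t : ℝ => f (t : AddCircle p)) =ᶠ[𝓝 s] fun _ => c := by
    filter_upwards [Icc_mem_nhds hs.1 hs.2] with t ht
    exact (hfφ t).trans (hconst t ht)
  exact hψ _ (eventuallyConst_nhds_of_comp_isOpenMap hlift_open
    ((EventuallyConst.const c).congr hlift_eq.symm))

/-- If `φ : ℝ/ℤ → ℝ` is continuous and constant on a nondegenerate arc, and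
`ψ : ℝ/ℤ → ℝ` is a Morse measuring function, then there is no homeomorphism
`f` of the circle with `ψ ∘ f = φ`; in particular no optimal homeomorphism
between `(ℝ/ℤ, φ)` and `(ℝ/ℤ, ψ)` exists when their natural pseudo-distance
is `0`. -/
theorem no_optimal_homeomorphism_of_constant_on_arc
    (φ ψ : AddCircle (1 : ℝ) → ℝ) (hφ : Continuous φ)
    (a b c : ℝ) (hab : a < b) (hlen : b - a < 1)
    (hconst : ∀ t ∈ Icc a b, φ (t : AddCircle (1 : ℝ)) = c)
    (hψC : ContDiff ℝ 2 (fun t : ℝ => ψ (t : AddCircle (1 : ℝ))))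
    (hψMorse : ∀ t : ℝ, deriv (fun s : ℝ => ψ (s : AddCircle (1 : ℝ))) t ≠ 0 ∨
      deriv (deriv (fun s : ℝ => ψ (s : AddCircle (1 : ℝ)))) t ≠ 0) :
    ¬ ∃ f : AddCircle (1 : ℝ) ≃ₜ AddCircle (1 : ℝ), ∀ x, ψ (f x) = φ x := by
  have hψ : ∀ x, ¬ EventuallyConst ψ (𝓝 x) := not_eventuallyConst_nhds_addCircle_of_lift fun t =>
    not_eventuallyConst_nhds_of_deriv_ne_zero_or_deriv_deriv_ne_zero (hψMorse t)
  exact fun ⟨f, hf⟩ =>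
    no_optimal_homeomorphism_of_constant_on_arc_general hab hconst hψ ⟨f, f.isOpenMap, hf⟩
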